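/- Let s ∈ (0,1), let N ≥ 2 be an integer, and let Ω ⊂ ℝ^N be a bounded open set of class C^{1,1} with 0 ∈ Ω, symmetric with respect to the hyperplane H_j = {x ∈ ℝ^N : x_j = 0} for some j ∈ {1,…,N} (i.e. T_j(Ω) = Ω where T_j(x) = x − 2 x_j e_j). Suppose H : Ω × ℝ^N → ℝ is such that for every x ∈ Ω the function z ↦ H(x,z) is continuous and bounded on ℝ^N, equals b_{N,s}|x−z|^{2s−N} for all z ∈ ℝ^N∖Ω, and is pointwise s-harmonic in Ω: for every z ∈ Ω the integral (c_{N,s}/2) ∫_{ℝ^N} (2H(x,z) − H(x,z+h) − H(x,z−h))/|h|^{N+2s} dh converges absolutely and equals 0. Define the fractional Robin function R_s(x) := H(x,x) and assume R_s is differentiable at 0. Then ∂_j R_s(0) = 0. -/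

import Mathlib

open MeasureTheory Real Filter Metric

noncomputable section

/-- Euclidean space `ℝ^N`. -/
abbrev Euc (N : ℕ) := EuclideanSpace ℝ (Fin N)

/-- The normalizing constant `c_{N,s}` of the fractional Laplacian. -/
def cNs (N : ℕ) (s : ℝ) : ℝ :=
  Real.pi ^ ((N : ℝ) / 2) * s * (4 : ℝ) ^ s * Real.Gamma (((N : ℝ) + 2 * s) / 2) /
    Real.Gamma (1 - s)

/-- The constant `b_{N,s}` of the fundamental solution. -/
def bNs (N : ℕ) (s : ℝ) : ℝ :=
  Real.pi ^ (-(N : ℝ) / 2) * (4 : ℝ) ^ (-s) * Real.Gamma (((N : ℝ) - 2 * s) / 2) /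
    Real.Gamma s

/-- The fractional Laplacian `(-Δ)^s u (x)`, via the absolutely convergent
symmetrized integral `-(c_{N,s}/2) ∫ (u(x+h)+u(x-h)-2u(x))/|h|^{N+2s} dh`. -/
def fracLap (N : ℕ) (s : ℝ) (u : Euc N → ℝ) (x : Euc N) : ℝ :=
  -(cNs N s / 2) * ∫ h : Euc N, (u (x + h) + u (x - h) - 2 * u x) / ‖h‖ ^ ((N : ℝ) + 2 * s)

/-- `φ ∈ C_c^∞(Ω)`. -/
def IsTestFn (N : ℕ) (Ω : Set (Euc N)) (φ : Euc N → ℝ) : Prop :=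
  ContDiff ℝ (⊤ : ℕ∞) φ ∧ HasCompactSupport φ ∧ tsupport φ ⊆ Ω

/-- The signed distance `δ̄(z) = dist(z, Ωᶜ) - dist(z, Ω)`. -/
def signedDistSet (N : ℕ) (Ω : Set (Euc N)) (z : Euc N) : ℝ :=
  Metric.infDist z Ωᶜ - Metric.infDist z Ω

/-- A bounded open set of class `C^{1,1}`: the signed distance is differentiable with
Lipschitz gradient on a neighborhood of `∂Ω`. -/
def IsC11 (N : ℕ) (Ω : Set (Euc N)) : Prop :=
  IsOpen Ω ∧ Bornology.IsBounded Ω ∧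
    ∃ U : Set (Euc N), IsOpen U ∧ frontier Ω ⊆ U ∧
      (∀ z ∈ U, DifferentiableAt ℝ (signedDistSet N Ω) z) ∧
      ∃ K : NNReal, LipschitzOnWith K (fun z => gradient (signedDistSet N Ω) z) U

/-- `δ(z) = dist(z, ∂Ω)`. -/
def bdist (N : ℕ) (Ω : Set (Euc N)) (z : Euc N) : ℝ := Metric.infDist z (frontier Ω)

/-- The outward unit normal `ν = -∇δ̄` (meaningful on `∂Ω`). -/
def outNormal (N : ℕ) (Ω : Set (Euc N)) (θ : Euc N) : Euc N :=
  -gradient (signedDistSet N Ω) θ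

/-- The surface measure on `∂Ω`: the `(N-1)`-dimensional Hausdorff measure
restricted to `∂Ω`. -/
def surf (N : ℕ) (Ω : Set (Euc N)) : Measure (Euc N) :=
  (μH[(N : ℝ) - 1]).restrict (frontier Ω)

/-- `g` is the fractional normal trace `γ_0^s(w)` on `∂Ω`. -/
def HasFracTrace (N : ℕ) (s : ℝ) (Ω : Set (Euc N)) (w g : Euc N → ℝ) : Prop :=
  ContinuousOn g (frontier Ω) ∧
    ∀ θ ∈ frontier Ω,
      Filter.Tendsto (fun z => w z / bdist N Ω z ^ s) (nhdsWithin θ Ω) (nhds (g θ))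

/-- `G` is a Green function of `(-Δ)^s` in `Ω` with pole at `x`, with constant `C`
in the Green function estimate. -/
def IsGreenFn (N : ℕ) (s : ℝ) (Ω : Set (Euc N)) (C : ℝ) (x : Euc N) (G : Euc N → ℝ) : Prop :=
  Integrable G ∧ (∀ z, z ∉ Ω → G z = 0) ∧
    (∀ φ, IsTestFn N Ω φ → ∫ z in Ω, G z * fracLap N s φ z = φ x) ∧
    ∀ z, z ≠ x → 0 ≤ G z ∧
      G z ≤ C * min (‖x - z‖ ^ (2 * s - (N : ℝ)))
        (bdist N Ω x ^ s * bdist N Ω z ^ s * ‖x - z‖ ^ (-(N : ℝ)))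

/-- The quadratic form `E_s(u,v)` associated with `(-Δ)^s`. -/
def Es (N : ℕ) (s : ℝ) (u v : Euc N → ℝ) : ℝ :=
  (cNs N s / 2) *
    ∫ p : Euc N × Euc N, (u p.1 - u p.2) * (v p.1 - v p.2) / ‖p.1 - p.2‖ ^ ((N : ℝ) + 2 * s)

/-- `u` is a weak solution of `(-Δ)^s u = f(·,u)` in `Ω`, `u = 0` outside `Ω`. -/
def IsWeakSolution (N : ℕ) (s : ℝ) (Ω : Set (Euc N)) (f : Euc N → ℝ → ℝ) (u : Euc N → ℝ) :
    Prop :=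
  (∃ C : NNReal, HolderWith C s.toNNReal u) ∧ (∀ z, z ∉ Ω → u z = 0) ∧
    ∀ φ, IsTestFn N Ω φ → Es N s u φ = ∫ z in Ω, f z (u z) * φ z

/-- Locally `β`-Hölder continuous function. -/
def LocHolder {X : Type*} [PseudoEMetricSpace X] (β : ℝ) (f : X → ℝ) : Prop :=
  ∀ p : X, ∃ t ∈ nhds p, ∃ C : NNReal, HolderOnWith C β.toNNReal f t

/-- The reflection `T_j(x) = x - 2 x_j e_j` across the hyperplane `{x_j = 0}`. -/
def reflectHyp (N : ℕ) (j : Fin N) (x : Euc N) : Euc N :=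
  x - (2 * x j) • EuclideanSpace.single j 1

/-!
Write `T` for the reflection. If `w` has vanishing symmetrized integrals in `Ω` and is nonpositive
outside, it cannot have a positive maximum: there the integrand would be nonnegative, and strictly
positive as soon as `h` is so long that both `z + h` and `z - h` leave the bounded set `Ω`. Hence
such functions are determined by their exterior values. The kernel is invariant under `T`, so
`H (T x) ∘ T` is harmonic in `Ω` like `H x`, with the same exterior values: `H (T x) (T z) = H x z`.
On the diagonal this makes the Robin function even across the hyperplane, so its derivative at a
fixed point of `T` vanishes in the direction that `T` reverses.
-/

section SecondDifference

variable {E : Type*} [AddCommGroup E]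

/-- The second difference of `u` at `z` with increment `h`, signed so that its integral against a
Lévy measure has the sign of `-Δ`. -/
def secondDiff (u : E → ℝ) (z h : E) : ℝ :=
  2 * u z - u (z + h) - u (z - h)

lemma secondDiff_sub (u v : E → ℝ) (z : E) :
    secondDiff (u - v) z = secondDiff u z - secondDiff v z := by
  funext h
  simp only [secondDiff, Pi.sub_apply]
  ring

lemma secondDiff_comp {F : Type*} [AddCommGroup F] {G : Type*} [FunLike G E F]
    [AddMonoidHomClass G E F] (u : F → ℝ) (T : G) (z : E) :
    secondDiff (u ∘ T) z = secondDiff u (T z) ∘ T := by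
  funext h
  simp only [secondDiff, Function.comp_apply, map_add, map_sub]

end SecondDifference

section LevyHarmonic

variable {E : Type*} [AddCommGroup E] [MeasurableSpace E] {ν : Measure E} {Ω : Set E}
  {u v : E → ℝ}

/-- Pointwise harmonicity on `Ω` for the symmetric jump operator with Lévy measure `ν`. Absolute
convergence is part of the notion, since a divergent Bochner integral is `0`. -/
def IsLevyHarmonicOn (ν : Measure E) (u : E → ℝ) (Ω : Set E) : Prop :=
  ∀ z ∈ Ω, Integrable (secondDiff u z) ν ∧ ∫ h, secondDiff u z h ∂ν = 0

lemma IsLevyHarmonicOn.sub (hu : IsLevyHarmonicOn ν u Ω) (hv : IsLevyHarmonicOn ν v Ω) :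
    IsLevyHarmonicOn ν (u - v) Ω := by
  intro z hz
  rw [secondDiff_sub]
  refine ⟨(hu z hz).1.sub (hv z hz).1, ?_⟩
  rw [integral_sub' (hu z hz).1 (hv z hz).1, (hu z hz).2, (hv z hz).2, sub_zero]

lemma IsLevyHarmonicOn.comp_measurePreserving {F G : Type*} [AddCommGroup F] [MeasurableSpace F]
    [FunLike G F E] [AddMonoidHomClass G F E] {μ : Measure F} {T : G}
    (hu : IsLevyHarmonicOn ν u Ω) (hT : MeasurePreserving T μ ν) :
    IsLevyHarmonicOn μ (u ∘ T) (T ⁻¹' Ω) := by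
  intro z hz
  obtain ⟨hint, hzero⟩ := hu (T z) hz
  rw [secondDiff_comp]
  refine ⟨hT.integrable_comp_of_integrable hint, ?_⟩
  rw [← hT.map_eq] at hint hzero
  rwa [integral_map hT.aemeasurable hint.aestronglyMeasurable] at hzero

end LevyHarmonic

section MaximumPrinciple

variable {E : Type*} [NormedAddCommGroup E] [ProperSpace E] [MeasurableSpace E] {ν : Measure E}
  {Ω : Set E}

theorem nonpos_of_integral_secondDiff_nonpos {w : E → ℝ}
    (hν : ∀ R : ℝ, ν {h | R < ‖h‖} ≠ 0) (hΩ : Bornology.IsBounded Ω)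
    (hw : UpperSemicontinuousOn w (closure Ω)) (hext : ∀ z ∉ Ω, w z ≤ 0)
    (hint : ∀ z ∈ Ω, Integrable (secondDiff w z) ν) (hsub : ∀ z ∈ Ω, ∫ h, secondDiff w z h ∂ν ≤ 0)
    (z : E) : w z ≤ 0 := by
  by_contra! hz
  have mem_of_pos : ∀ y, 0 < w y → y ∈ Ω := fun y hy ↦ by_contra fun h ↦ hy.not_ge (hext y h)
  obtain ⟨m, -, hmax⟩ := hw.exists_isMaxOn ⟨z, subset_closure (mem_of_pos z hz)⟩
    hΩ.isCompact_closure
  have hm_pos : 0 < w m := hz.trans_le (hmax (subset_closure (mem_of_pos z hz)))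
  have hmΩ : m ∈ Ω := mem_of_pos m hm_pos
  have w_le : ∀ y, w y ≤ w m := fun y ↦ by
    by_cases hy : y ∈ Ω
    · exact hmax (subset_closure hy)
    · exact (hext y hy).trans hm_pos.le
  have secondDiff_nonneg : 0 ≤ secondDiff w m := fun h ↦ by
    simp only [secondDiff, Pi.zero_apply]
    linarith [w_le (m + h), w_le (m - h)]
  have secondDiff_ae_zero : secondDiff w m =ᵐ[ν] 0 :=
    (integral_eq_zero_iff_of_nonneg secondDiff_nonneg (hint m hmΩ)).1
      ((hsub m hmΩ).antisymm (integral_nonneg secondDiff_nonneg))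
  obtain ⟨R, hR⟩ := hΩ.subset_closedBall m
  refine hν R (measure_mono_null (fun h (hh : R < ‖h‖) ↦ ?_) secondDiff_ae_zero)
  have add_notMem : m + h ∉ Ω := fun hmem ↦ hh.not_ge <| by
    simpa [mem_closedBall_iff_norm] using hR hmem
  have sub_notMem : m - h ∉ Ω := fun hmem ↦ hh.not_ge <| by
    simpa [mem_closedBall_iff_norm] using hR hmem
  have secondDiff_pos : 0 < secondDiff w m h := by
    simp only [secondDiff]
    linarith [hext _ add_notMem, hext _ sub_notMem]
  exact secondDiff_pos.ne'

theorem IsLevyHarmonicOn.eq_of_eqOn_compl {u v : E → ℝ} (hν : ∀ R : ℝ, ν {h | R < ‖h‖} ≠ 0)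
    (hΩ : Bornology.IsBounded Ω) (hu : IsLevyHarmonicOn ν u Ω) (hv : IsLevyHarmonicOn ν v Ω)
    (hu_cont : ContinuousOn u (closure Ω)) (hv_cont : ContinuousOn v (closure Ω))
    (hext : Set.EqOn u v Ωᶜ) : u = v := by
  have sub_nonpos {f g : E → ℝ} (hf : IsLevyHarmonicOn ν f Ω) (hg : IsLevyHarmonicOn ν g Ω)
      (hf_cont : ContinuousOn f (closure Ω)) (hg_cont : ContinuousOn g (closure Ω))
      (hfg : Set.EqOn f g Ωᶜ) (z : E) : f z - g z ≤ 0 :=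
    nonpos_of_integral_secondDiff_nonpos hν hΩ (hf_cont.sub hg_cont).upperSemicontinuousOn
      (fun y hy ↦ (sub_eq_zero.2 (hfg hy)).le) (fun y hy ↦ (hf.sub hg y hy).1)
      (fun y hy ↦ (hf.sub hg y hy).2.le) z
  funext z
  linarith [sub_nonpos hu hv hu_cont hv_cont hext z, sub_nonpos hv hu hv_cont hu_cont hext.symm z]

end MaximumPrinciple

section Symmetry

theorem hasFDerivAt_apply_eq_zero_of_comp_eventuallyEq {𝕜 E F : Type*}
    [NontriviallyNormedField 𝕜] [NeZero (2 : 𝕜)] [NormedAddCommGroup E] [NormedSpace 𝕜 E]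
    [NormedAddCommGroup F] [NormedSpace 𝕜 F] {f : E → F} {f' : E →L[𝕜] F} {T : E →L[𝕜] E}
    {p v : E} (hf : HasFDerivAt f f' p) (hfT : f ∘ T =ᶠ[nhds p] f) (hp : T p = p)
    (hv : T v = -v) : f' v = 0 := by
  have hcomp : HasFDerivAt (f ∘ T) (f' ∘L T) p := HasFDerivAt.comp p (hp.symm ▸ hf) T.hasFDerivAt
  have hf' : f' ∘L T = f' := (hcomp.congr_of_eventuallyEq hfT.symm).unique hf
  have f'_eq_neg : f' v = -f' v := by
    rw [← map_neg, ← hv, ← ContinuousLinearMap.comp_apply, hf']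
  have two_smul_eq_zero : (2 : 𝕜) • f' v = 0 := by
    rw [two_smul, ← eq_neg_iff_add_eq_zero]
    exact f'_eq_neg
  exact (smul_eq_zero_iff_right two_ne_zero).1 two_smul_eq_zero

variable {E : Type*} [NormedAddCommGroup E] [NormedSpace ℝ E] [ProperSpace E] [MeasurableSpace E]
  {ν : Measure E} {Ω : Set E} {H : E → E → ℝ} {T : E →L[ℝ] E}

theorem apply_apply_eq_of_isLevyHarmonicOn (hν : ∀ R : ℝ, ν {h | R < ‖h‖} ≠ 0)
    (hT : MeasurePreserving T ν ν) (hΩ : Bornology.IsBounded Ω) (hTΩ : T ⁻¹' Ω = Ω)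
    (hH_cont : ∀ x ∈ Ω, ContinuousOn (H x) (closure Ω))
    (hH_ext : ∀ x ∈ Ω, ∀ z ∉ Ω, H (T x) (T z) = H x z)
    (hH_harm : ∀ x ∈ Ω, IsLevyHarmonicOn ν (H x) Ω) {x : E} (hx : x ∈ Ω) (z : E) :
    H (T x) (T z) = H x z := by
  have hTx : T x ∈ Ω := hTΩ.ge hx
  have hcomp : IsLevyHarmonicOn ν (H (T x) ∘ T) Ω := by
    simpa only [hTΩ] using (hH_harm (T x) hTx).comp_measurePreserving hT
  have hcomp_cont : ContinuousOn (H (T x) ∘ T) (closure Ω) :=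
    (hH_cont (T x) hTx).comp T.continuous.continuousOn
      (Set.MapsTo.closure (fun y hy ↦ hTΩ.ge hy) T.continuous)
  exact congrFun
    (hcomp.eq_of_eqOn_compl hν hΩ (hH_harm x hx) hcomp_cont (hH_cont x hx) (hH_ext x hx)) z

theorem statement5_general {R' : E →L[ℝ] ℝ} {p v : E} (hν : ∀ R : ℝ, ν {h | R < ‖h‖} ≠ 0)
    (hT : MeasurePreserving T ν ν) (hΩ : Bornology.IsBounded Ω) (hTΩ : T ⁻¹' Ω = Ω)
    (hΩp : Ω ∈ nhds p) (hp : T p = p) (hv : T v = -v)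
    (hH_cont : ∀ x ∈ Ω, ContinuousOn (H x) (closure Ω))
    (hH_ext : ∀ x ∈ Ω, ∀ z ∉ Ω, H (T x) (T z) = H x z)
    (hH_harm : ∀ x ∈ Ω, IsLevyHarmonicOn ν (H x) Ω)
    (hR : HasFDerivAt (fun x ↦ H x x) R' p) : R' v = 0 := by
  refine hasFDerivAt_apply_eq_zero_of_comp_eventuallyEq hR ?_ hp hv
  filter_upwards [hΩp] with x hx
  exact apply_apply_eq_of_isLevyHarmonicOn hν hT hΩ hTΩ hH_cont hH_ext hH_harm hx x

end Symmetry

section PowerLaw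

lemma nnnorm_rpow_neg_smul {E : Type*} [SeminormedAddCommGroup E] (a r : ℝ) (h : E) :
    (‖h‖₊ ^ (-a)) • r = r / ‖h‖ ^ a := by
  rw [NNReal.smul_def, NNReal.coe_rpow, coe_nnnorm, Real.rpow_neg (norm_nonneg h), smul_eq_mul,
    div_eq_inv_mul]

variable {E : Type*} [NormedAddCommGroup E] [MeasurableSpace E]

/-- The Lévy measure with density `‖h‖ ^ (-a)` with respect to `μ`. On `ℝ^N` with Lebesgue measure,
`a = N + 2s` gives the jump measure of the fractional Laplacian up to normalization. -/
def powerLawMeasure (μ : Measure E) (a : ℝ) : Measure E :=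
  μ.withDensity fun h ↦ ((‖h‖₊ ^ (-a) : NNReal) : ENNReal)

variable [OpensMeasurableSpace E] {μ : Measure E} (a : ℝ)

lemma integrable_powerLawMeasure_iff {f : E → ℝ} :
    Integrable f (powerLawMeasure μ a) ↔ Integrable (fun h ↦ f h / ‖h‖ ^ a) μ := by
  rw [powerLawMeasure,
    integrable_withDensity_iff_integrable_smul (measurable_nnnorm.pow_const (-a))]
  simp only [nnnorm_rpow_neg_smul]

lemma integral_powerLawMeasure (f : E → ℝ) :
    ∫ h, f h ∂powerLawMeasure μ a = ∫ h, f h / ‖h‖ ^ a ∂μ := by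
  rw [powerLawMeasure, integral_withDensity_eq_integral_smul (measurable_nnnorm.pow_const (-a))]
  simp only [nnnorm_rpow_neg_smul]

lemma powerLawMeasure_norm_gt_ne_zero [NormedSpace ℝ E] [Nontrivial E] [μ.IsOpenPosMeasure]
    (R : ℝ) : powerLawMeasure μ a {h | R < ‖h‖} ≠ 0 := by
  have subset_support : {h : E | max R 0 < ‖h‖} ⊆
      {h | ((‖h‖₊ ^ (-a) : NNReal) : ENNReal) ≠ 0} ∩ {h | R < ‖h‖} :=
    fun h (hh : max R 0 < ‖h‖) ↦
      have h_pos : 0 < ‖h‖₊ := (le_max_right R 0).trans_lt hh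
      ⟨ENNReal.coe_ne_zero.2 (NNReal.rpow_pos h_pos).ne', (le_max_left R 0).trans_lt hh⟩
  have measure_ne_zero : μ {h : E | max R 0 < ‖h‖} ≠ 0 :=
    (isOpen_lt continuous_const continuous_norm).measure_ne_zero _
      (NormedSpace.exists_lt_norm ℝ E (max R 0))
  rw [powerLawMeasure, Ne,
    withDensity_apply_eq_zero (measurable_nnnorm.pow_const (-a)).coe_nnreal_ennreal]
  exact fun hnull ↦ measure_ne_zero (measure_mono_null subset_support hnull)

lemma measurePreserving_powerLawMeasure {T : E → E} (hT : MeasurePreserving T μ μ)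
    (hnorm : ∀ h, ‖T h‖ = ‖h‖) :
    MeasurePreserving T (powerLawMeasure μ a) (powerLawMeasure μ a) := by
  refine ⟨hT.measurable, Measure.ext fun A hA ↦ ?_⟩
  have density_comp (h : E) : ((‖T h‖₊ ^ (-a) : NNReal) : ENNReal) = (‖h‖₊ ^ (-a) : NNReal) := by
    rw [show ‖T h‖₊ = ‖h‖₊ from NNReal.eq (hnorm h)]
  rw [Measure.map_apply hT.measurable hA, powerLawMeasure, withDensity_apply _ hA,
    withDensity_apply _ (hT.measurable hA),
    ← hT.setLIntegral_comp_preimage hA (measurable_nnnorm.pow_const (-a)).coe_nnreal_ennreal]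
  simp only [density_comp]

end PowerLaw

section FractionalLaplacian

variable {N : ℕ} {s : ℝ}

lemma cNs_ne_zero (hs0 : 0 < s) (hs1 : s < 1) : cNs N s ≠ 0 := by
  have gamma_num_pos : 0 < Real.Gamma (((N : ℝ) + 2 * s) / 2) :=
    Real.Gamma_pos_of_pos (by positivity)
  have gamma_den_pos : 0 < Real.Gamma (1 - s) := Real.Gamma_pos_of_pos (sub_pos.2 hs1)
  unfold cNs
  exact (div_pos (mul_pos (by positivity) gamma_num_pos) gamma_den_pos).ne'

lemma isLevyHarmonicOn_of_fractional (hs0 : 0 < s) (hs1 : s < 1) {Ω : Set (Euc N)}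
    {u : Euc N → ℝ}
    (hu : ∀ z ∈ Ω, Integrable (fun h ↦ secondDiff u z h / ‖h‖ ^ ((N : ℝ) + 2 * s)) ∧
      cNs N s / 2 * ∫ h, secondDiff u z h / ‖h‖ ^ ((N : ℝ) + 2 * s) = 0) :
    IsLevyHarmonicOn (powerLawMeasure volume (N + 2 * s)) u Ω := by
  intro z hz
  rw [integrable_powerLawMeasure_iff, integral_powerLawMeasure]
  exact ⟨(hu z hz).1, (mul_eq_zero.1 (hu z hz).2).resolve_left
    (div_ne_zero (cNs_ne_zero hs0 hs1) two_ne_zero)⟩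

lemma coe_reflection_orthogonal_span_single (j : Fin N) :
    ⇑(ℝ ∙ (EuclideanSpace.single j 1 : Euc N))ᗮ.reflection = reflectHyp N j := by
  funext x
  rw [Submodule.reflection_orthogonal_apply, Submodule.reflection_singleton_apply]
  simp [reflectHyp, EuclideanSpace.inner_single_left, two_smul, two_mul, add_smul]

end FractionalLaplacian

/-- criticality of the fractional Robin function at the center of a
symmetric domain. -/
theorem statement5
    (s : ℝ) (hs0 : 0 < s) (hs1 : s < 1)
    (N : ℕ) (hN : 2 ≤ N)
    (Ω : Set (Euc N)) (hΩ : IsC11 N Ω) (h0 : (0 : Euc N) ∈ Ω)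
    (j : Fin N) (hsym : reflectHyp N j '' Ω = Ω)
    (H : Euc N → Euc N → ℝ)
    (hHcont : ∀ x ∈ Ω, Continuous (H x))
    (hHbdd : ∀ x ∈ Ω, ∃ M : ℝ, ∀ z, |H x z| ≤ M)
    (hHout : ∀ x ∈ Ω, ∀ z, z ∉ Ω → H x z = bNs N s * ‖x - z‖ ^ (2 * s - (N : ℝ)))
    (hHharm : ∀ x ∈ Ω, ∀ z ∈ Ω,
      Integrable (fun h : Euc N =>
        (2 * H x z - H x (z + h) - H x (z - h)) / ‖h‖ ^ ((N : ℝ) + 2 * s)) ∧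
      (cNs N s / 2) *
        (∫ h : Euc N,
          (2 * H x z - H x (z + h) - H x (z - h)) / ‖h‖ ^ ((N : ℝ) + 2 * s)) = 0)
    (hRdiff : DifferentiableAt ℝ (fun x => H x x) 0) :
    fderiv ℝ (fun x => H x x) 0 (EuclideanSpace.single j 1) = 0 := by
  let T : Euc N ≃ₗᵢ[ℝ] Euc N := (ℝ ∙ (EuclideanSpace.single j 1 : Euc N))ᗮ.reflection
  have hTT : Function.Involutive T := Submodule.reflection_involutive _
  have hTΩ : T ⁻¹' Ω = Ω := by
    rw [← Set.image_eq_preimage_of_inverse hTT hTT, coe_reflection_orthogonal_span_single, hsym]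
  have hH_ext : ∀ x ∈ Ω, ∀ z ∉ Ω, H (T x) (T z) = H x z := fun x hx z hz ↦ by
    have hTx : T x ∈ Ω := hTΩ.ge hx
    have hTz : T z ∉ Ω := fun h ↦ hz (hTΩ.le h)
    rw [hHout x hx z hz, hHout (T x) hTx (T z) hTz, ← map_sub, T.norm_map]
  have : Nontrivial (Euc N) := ⟨EuclideanSpace.single j 1, 0, by simp⟩
  exact statement5_general (T := T.toContinuousLinearEquiv)
    (powerLawMeasure_norm_gt_ne_zero (N + 2 * s))
    (measurePreserving_powerLawMeasure (N + 2 * s) T.measurePreserving T.norm_map)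
    hΩ.2.1 hTΩ (hΩ.1.mem_nhds h0) (map_zero T)
    (Submodule.reflection_orthogonalComplement_singleton_eq_neg _)
    (fun x hx ↦ (hHcont x hx).continuousOn) hH_ext
    (fun x hx ↦ isLevyHarmonicOn_of_fractional hs0 hs1 (hHharm x hx)) hRdiff.hasFDerivAt
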